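/- arXiv:2409.19752 — 3 statements merged into one kernel-verified Lean document; each statement's English description precedes it below -/
import Mathlib

section
/- Let ε ∈ ℝ and let u : (0,∞) × (0,∞) → ℝ be positive, continuously differentiable in t, and twice continuously differentiable in r. Fix (t,r) with t > 0, r > 0. Then u satisfies the radial equation r^{-n} ∂ₜu = u^q · r^{1-N} ∂_r( r^{n₁+N-1} u^{m-1} |∂_r(u^k)|^{p-2} ∂_r u ) + ε r^{-n} t^l u^{β} at (t,r) if and only if the function v := u^{1-q} satisfies r^{-n} ∂ₜv = r^{1-N} ∂_r( r^{n₁+N-1} v^{m₂-1} |∂_r(v^{k₂})|^{p-2} ∂_r v ) + ε(1-q) r^{-n} t^l v^{β₂} at (t,r). -/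
open Real Set Filter Topology

/-!
For `v = u ^ a` with `a = 1 - q`, the chain rule gives `∂v = a * u ^ (-q) * ∂u`. The exponents are
chosen so that in the flux `v ^ (m / a - 1) = u ^ (m - 1) * u ^ q` absorbs the factor `u ^ (-q)`,
while `v ^ (k / a) = u ^ k`; the flux is therefore multiplied by the constant `a` alone, which
passes through the outer derivative. Hence the equation for `v` is the equation for `u` multiplied
by `a * u ^ (-q) ≠ 0`.
-/

/-- The flux `w f^{m-1} Φ((f^k)') f'` of a doubly nonlinear diffusion in one space variable, with
spatial weight `w` and gradient nonlinearity `Φ`. The radial equation has `w ρ = ρ^{n₁+N-1}` and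
`Φ s = |s|^{p-2}`. -/
noncomputable def diffusionFlux (w Φ : ℝ → ℝ) (m k : ℝ) (f : ℝ → ℝ) (x : ℝ) : ℝ :=
  w x * f x ^ (m - 1) * Φ (deriv (fun y => f y ^ k) x) * deriv f x

lemma rpow_rpow_div_sub_one_mul_rpow_sub_one {a y : ℝ} (ha : a ≠ 0) (hy : 0 < y) (m : ℝ) :
    (y ^ a) ^ (m / a - 1) * y ^ (a - 1) = y ^ (m - 1) := by
  rw [← rpow_mul hy.le, ← rpow_add hy]
  congr 1
  field_simp
  ring

lemma rpow_rpow_div {a y : ℝ} (ha : a ≠ 0) (hy : 0 ≤ y) (k : ℝ) :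
    (y ^ a) ^ (k / a) = y ^ k := by
  rw [← rpow_mul hy, mul_div_cancel₀ k ha]

section DiffusionFlux

variable {a x : ℝ} {f : ℝ → ℝ}

lemma deriv_rpow_rpow_div (ha : a ≠ 0) (hf : ContinuousAt f x) (hfx : 0 < f x) (k : ℝ) :
    deriv (fun y => (f y ^ a) ^ (k / a)) x = deriv (fun y => f y ^ k) x := by
  apply EventuallyEq.deriv_eq
  filter_upwards [hf.eventually_const_lt hfx] with y hy
  exact rpow_rpow_div ha hy.le k

lemma diffusionFlux_rpow (ha : a ≠ 0) (hf : DifferentiableAt ℝ f x) (hfx : 0 < f x)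
    (w Φ : ℝ → ℝ) (m k : ℝ) :
    diffusionFlux w Φ (m / a) (k / a) (fun y => f y ^ a) x = a * diffusionFlux w Φ m k f x := by
  unfold diffusionFlux
  rw [deriv_rpow_rpow_div ha hf.continuousAt hfx,
    deriv_rpow_const (p := a) hf (Or.inl hfx.ne'),
    ← rpow_rpow_div_sub_one_mul_rpow_sub_one ha hfx m]
  ring

lemma deriv_diffusionFlux_rpow (ha : a ≠ 0) (hf : ∀ᶠ y in 𝓝 x, DifferentiableAt ℝ f y)
    (hfx : 0 < f x) (w Φ : ℝ → ℝ) (m k : ℝ) :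
    deriv (diffusionFlux w Φ (m / a) (k / a) (fun y => f y ^ a)) x =
      a * deriv (diffusionFlux w Φ m k f) x := by
  have hpos : ∀ᶠ y in 𝓝 x, 0 < f y := hf.self_of_nhds.continuousAt.eventually_const_lt hfx
  rw [← deriv_const_mul_field]
  apply EventuallyEq.deriv_eq
  filter_upwards [hf, hpos] with y hfy hy
  exact diffusionFlux_rpow ha hfy hy w Φ m k

end DiffusionFlux

theorem stmt2_general {q : ℝ} (hq : q ≠ 1) (k m β ε b c g : ℝ) (w Φ : ℝ → ℝ) {u : ℝ → ℝ → ℝ}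
    {t r : ℝ} (hupos : 0 < u t r) (hu_t : DifferentiableAt ℝ (fun s => u s r) t)
    (hu_r : ∀ᶠ ρ in 𝓝 r, DifferentiableAt ℝ (u t) ρ) :
    b * deriv (fun s => u s r) t =
        u t r ^ q * (c * deriv (diffusionFlux w Φ m k (u t)) r) + ε * b * g * u t r ^ β ↔
      b * deriv (fun s => u s r ^ (1 - q)) t =
        c * deriv (diffusionFlux w Φ (m / (1 - q)) (k / (1 - q)) (fun ρ => u t ρ ^ (1 - q))) r +
          ε * (1 - q) * b * g * (u t r ^ (1 - q)) ^ ((β - q) / (1 - q)) := by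
  have hq' : 1 - q ≠ 0 := sub_ne_zero.mpr hq.symm
  have hfactor : (1 - q) * u t r ^ (-q) ≠ 0 := mul_ne_zero hq' (rpow_pos_of_pos hupos _).ne'
  have hcancel : u t r ^ (-q) * u t r ^ q = 1 := by rw [← rpow_add hupos, neg_add_cancel, rpow_zero]
  have htime : deriv (fun s => u s r ^ (1 - q)) t =
      (1 - q) * u t r ^ (-q) * deriv (fun s => u s r) t := by
    rw [deriv_rpow_const hu_t (Or.inl hupos.ne'), sub_sub_cancel_left]
    ring
  have hsource : (u t r ^ (1 - q)) ^ ((β - q) / (1 - q)) = u t r ^ (-q) * u t r ^ β := by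
    rw [rpow_rpow_div hq' hupos.le, ← rpow_add hupos, neg_add_eq_sub]
  rw [htime, deriv_diffusionFlux_rpow hq' hu_r hupos, hsource, ← mul_right_inj' hfactor]
  congr! 1
  · ring
  · linear_combination (1 - q) * c * deriv (diffusionFlux w Φ m k (u t)) r * hcancel

/-- The substitution `v = u^{1-q}` transforms the radial equation
`r^{-n} ∂ₜu = u^q r^{1-N} ∂_r(r^{n₁+N-1} u^{m-1} |∂_r(u^k)|^{p-2} ∂_r u) + ε r^{-n} t^l u^β`
into
`r^{-n} ∂ₜv = r^{1-N} ∂_r(r^{n₁+N-1} v^{m₂-1} |∂_r(v^{k₂})|^{p-2} ∂_r v) + ε(1-q) r^{-n} t^l v^{β₂}`,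
pointwise at any `(t,r)` with `t > 0`, `r > 0`. -/
theorem stmt2
    (p q k m N n n₁ l β ε : ℝ)
    (hp : 2 ≤ p) (hq0 : 0 < q) (hq1 : q < 1) (hk : 1 ≤ k) (hm : 1 ≤ m)
    (hn0 : 0 ≤ n) (hnN : n < N) (hpn : n + n₁ < p)
    (m₂ k₂ β₂ : ℝ)
    (hm₂ : m₂ = m / (1 - q)) (hk₂ : k₂ = k / (1 - q))
    (hβ₂ : β₂ = (β - q) / (1 - q))
    (u : ℝ → ℝ → ℝ)
    (hupos : ∀ t, 0 < t → ∀ r, 0 < r → 0 < u t r)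
    (hu_t : ∀ r, 0 < r → ContDiffOn ℝ 1 (fun t => u t r) (Ioi 0))
    (hu_r : ∀ t, 0 < t → ContDiffOn ℝ 2 (fun r => u t r) (Ioi 0))
    (t r : ℝ) (ht : 0 < t) (hr : 0 < r) :
    (r ^ (-n) * deriv (fun s => u s r) t
      = u t r ^ q *
          (r ^ (1 - N) *
            deriv (fun ρ => ρ ^ (n₁ + N - 1) * u t ρ ^ (m - 1) *
              |deriv (fun σ => u t σ ^ k) ρ| ^ (p - 2) * deriv (fun σ => u t σ) ρ) r)
        + ε * r ^ (-n) * t ^ l * u t r ^ β)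
    ↔
    (r ^ (-n) * deriv (fun s => u s r ^ (1 - q)) t
      = r ^ (1 - N) *
          deriv (fun ρ => ρ ^ (n₁ + N - 1) * (u t ρ ^ (1 - q)) ^ (m₂ - 1) *
            |deriv (fun σ => (u t σ ^ (1 - q)) ^ k₂) ρ| ^ (p - 2) *
            deriv (fun σ => u t σ ^ (1 - q)) ρ) r
        + ε * (1 - q) * r ^ (-n) * t ^ l * (u t r ^ (1 - q)) ^ β₂) := by
  subst hm₂ hk₂ hβ₂
  exact stmt2_general hq1.ne k m β ε (r ^ (-n)) (r ^ (1 - N)) (t ^ l)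
    (fun ρ => ρ ^ (n₁ + N - 1)) (fun s => |s| ^ (p - 2)) (hupos t ht r hr)
    (((hu_t r hr).differentiableOn one_ne_zero).differentiableAt (Ioi_mem_nhds ht))
    (((hu_r t ht).differentiableOn two_ne_zero).eventually_differentiableAt (Ioi_mem_nhds hr))
end

section
/- Assume q ∈ (0,1), l > -1, and β₂ > max(1, l₅+1). Let v̄(t) = l₁ t^{(1+l)/(1-β₂)} with l₁ = [(1-q)(β₂-1)/(1+l)]^{1/(1-β₂)}, let τ(t) = l₆(1-β₂) t^{(l₅+1-β₂)/(1-β₂)}/(l₅+1-β₂) with l₆ = l₁^{m₂+k₂(p-2)-1} (so τ(t) > 0 for t > 0), and let φ(r) = p r^{(p-n-n₁)/p}/(p-n-n₁). Suppose w : (0,∞) × (0,∞) → ℝ is positive, continuously differentiable in its first variable and twice continuously differentiable in its second variable, and satisfies, for all τ > 0 and φ > 0, ∂_τ w = φ^{1-s} ∂_φ( φ^{s-1} w^{m₂-1} |∂_φ(w^{k₂})|^{p-2} ∂_φ w ) + (w^{β₂} + w)/(l₇ τ). Then the function v(t,r) := v̄(t) · w(τ(t), φ(r)) satisfies, for all t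 > 0 and r > 0, r^{-n} ∂ₜv = r^{1-N} ∂_r( r^{n₁+N-1} v^{m₂-1} |∂_r(v^{k₂})|^{p-2} ∂_r v ) + (1-q) r^{-n} t^l v^{β₂}. -/
open Real Set Filter Topology

/-!
The amplitude `v̄` solves `v̄' = -(1-q) t^l v̄^β₂`, `τ` is the clock `τ' = v̄^(m₂+k₂(p-2)-1)`, and
the two are tied by `l₇ τ v̄' = -v̄ τ'`. The diffusion operator is homogeneous of degree
`m₂ + k₂(p-2)`, and `r ↦ r^a / a`, with `a = (p-n-n₁)/p`, turns it into the same operator with other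
weights, so it contributes `v̄ τ'` times the operator applied to `w`. The product rule then gives
`∂ₜv = v̄' w + v̄ τ' ∂_τ w`, in which `v̄ τ' (w^β₂ + w)/(l₇ τ) = -v̄' (w^β₂ + w)`: the terms linear
in `w` cancel and `-v̄' w^β₂ = (1-q) t^l v^β₂` remains.
-/

theorem deriv_comp_of_hasStrictDerivAt {𝕜 E : Type*} [NontriviallyNormedField 𝕜] [CompleteSpace 𝕜]
    [NormedAddCommGroup E] [NormedSpace 𝕜 E] {f : 𝕜 → 𝕜} {f' x : 𝕜}
    (hf : HasStrictDerivAt f f' x) (hf' : f' ≠ 0) (F : 𝕜 → E) :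
    deriv (fun z => F (f z)) x = f' • deriv F (f x) := by
  by_cases hF : DifferentiableAt 𝕜 F (f x)
  · exact (hF.hasDerivAt.scomp x hf.hasDerivAt).deriv
  -- The local inverse of `f` transfers differentiability of `F ∘ f` back to `F`.
  have hFf : ¬ DifferentiableAt 𝕜 (fun z => F (f z)) x := by
    intro hFf
    set g := hf.localInverse f f' x hf'
    have hg : DifferentiableAt 𝕜 g (f x) := (hf.to_localInverse hf').hasDerivAt.differentiableAt
    have hgx : g (f x) = x := (hf.eventually_left_inverse hf').self_of_nhds
    rw [← hgx] at hFf
    refine hF ((hFf.comp (f x) hg).congr_of_eventuallyEq ?_)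
    filter_upwards [hf.eventually_right_inverse hf'] with y hy
    exact congrArg F hy.symm
  rw [deriv_zero_of_not_differentiableAt hF, deriv_zero_of_not_differentiableAt hFf, smul_zero]

/-- The flux `y^σ u^(m-1) |∂(u^k)|^(p-2) ∂u` of a doubly nonlinear diffusion in one radial
variable, with power weight `y^σ`. -/
noncomputable def radialFlux (p m k σ : ℝ) (u : ℝ → ℝ) (y : ℝ) : ℝ :=
  y ^ σ * u y ^ (m - 1) * |deriv (fun z => u z ^ k) y| ^ (p - 2) * deriv u y

/-- The radial diffusion operator `y^ν ∂(y^σ u^(m-1) |∂(u^k)|^(p-2) ∂u)`. The two weights are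
independent parameters so that it covers the operators in both the physical variable `r` and the
transformed variable `φ`. -/
noncomputable def radialDiffusion (p m k ν σ : ℝ) (u : ℝ → ℝ) (y : ℝ) : ℝ :=
  y ^ ν * deriv (radialFlux p m k σ u) y

section Homogeneity

variable {p m k σ V y : ℝ} {u : ℝ → ℝ}

theorem radialFlux_const_mul (hV : 0 < V) (hu : ∀ᶠ z in 𝓝 y, 0 ≤ u z) :
    radialFlux p m k σ (fun z => V * u z) y =
      V ^ (m + k * (p - 2)) * radialFlux p m k σ u y := by
  have deriv_rpow : deriv (fun z => (V * u z) ^ k) y = V ^ k * deriv (fun z => u z ^ k) y := by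
    rw [← deriv_const_mul_field]
    exact EventuallyEq.deriv_eq (hu.mono fun z hz => mul_rpow hV.le hz)
  have rpow_split : V ^ (m + k * (p - 2)) = V ^ (m - 1) * V ^ (k * (p - 2)) * V := by
    rw [← rpow_add hV, ← rpow_add_one hV.ne']
    ring_nf
  have hVk : 0 < V ^ k := rpow_pos_of_pos hV k
  rw [radialFlux, radialFlux, deriv_rpow, deriv_const_mul_field, mul_rpow hV.le hu.self_of_nhds,
    abs_mul, abs_of_pos hVk, mul_rpow hVk.le (abs_nonneg _), ← rpow_mul hV.le, rpow_split]
  ring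

theorem radialDiffusion_const_mul {ν : ℝ} (hV : 0 < V) (hu : ∀ᶠ z in 𝓝 y, 0 ≤ u z) :
    radialDiffusion p m k ν σ (fun z => V * u z) y =
      V ^ (m + k * (p - 2)) * radialDiffusion p m k ν σ u y := by
  have flux_eq : radialFlux p m k σ (fun z => V * u z) =ᶠ[𝓝 y]
      fun z => V ^ (m + k * (p - 2)) * radialFlux p m k σ u z :=
    hu.eventually_nhds.mono fun _ hz => radialFlux_const_mul hV hz
  rw [radialDiffusion, radialDiffusion, flux_eq.deriv_eq, deriv_const_mul_field]
  ring

end Homogeneity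

section ChangeOfVariable

variable {p m k s a r : ℝ} {φ : ℝ → ℝ}

theorem hasStrictDerivAt_of_eqOn_rpow_div (ha : a ≠ 0)
    (hφ : EqOn φ (fun ρ => ρ ^ a / a) (Ioi 0)) (hr : 0 < r) :
    HasStrictDerivAt φ (r ^ (a - 1)) r := by
  have h : HasStrictDerivAt (fun ρ : ℝ => ρ ^ a / a) (a * r ^ (a - 1) / a) r :=
    (hasStrictDerivAt_rpow_const_of_ne hr.ne' a).div_const a
  rw [mul_div_cancel_left₀ _ ha] at h
  exact h.congr_of_eventuallyEq (hφ.eventuallyEq_of_mem (Ioi_mem_nhds hr)).symm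

theorem deriv_comp_of_eqOn_rpow_div (ha : a ≠ 0) (hφ : EqOn φ (fun ρ => ρ ^ a / a) (Ioi 0))
    (hr : 0 < r) (F : ℝ → ℝ) :
    deriv (fun ρ => F (φ ρ)) r = r ^ (a - 1) * deriv F (φ r) :=
  deriv_comp_of_hasStrictDerivAt (hasStrictDerivAt_of_eqOn_rpow_div ha hφ hr)
    (rpow_pos_of_pos hr _).ne' F

theorem radialFlux_comp {σ : ℝ} (ha : 0 < a) (hσ : σ + (a - 1) * (p - 1) = a * (s - 1))
    (hφ : EqOn φ (fun ρ => ρ ^ a / a) (Ioi 0)) (hr : 0 < r) (u : ℝ → ℝ) :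
    radialFlux p m k σ (fun ρ => u (φ ρ)) r =
      a ^ (s - 1) * radialFlux p m k (s - 1) u (φ r) := by
  have hra : 0 < r ^ (a - 1) := rpow_pos_of_pos hr _
  have weight : r ^ σ * (r ^ (a - 1)) ^ (p - 2) * r ^ (a - 1) = a ^ (s - 1) * φ r ^ (s - 1) :=
    calc r ^ σ * (r ^ (a - 1)) ^ (p - 2) * r ^ (a - 1)
        = r ^ (a * (s - 1)) := by
          rw [← rpow_mul hr.le, ← rpow_add hr, ← rpow_add hr, ← hσ]
          ring_nf
      _ = (a * φ r) ^ (s - 1) := by rw [hφ hr, mul_div_cancel₀ _ ha.ne', rpow_mul hr.le]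
      _ = a ^ (s - 1) * φ r ^ (s - 1) :=
          mul_rpow ha.le (by rw [hφ hr]; positivity)
  rw [radialFlux, radialFlux, deriv_comp_of_eqOn_rpow_div ha.ne' hφ hr fun y => u y ^ k,
    deriv_comp_of_eqOn_rpow_div ha.ne' hφ hr u, abs_mul, abs_of_pos hra,
    mul_rpow hra.le (abs_nonneg _)]
  linear_combination
    u (φ r) ^ (m - 1) * |deriv (fun y => u y ^ k) (φ r)| ^ (p - 2) * deriv u (φ r) * weight

theorem radialDiffusion_comp {N n n₁ : ℝ} (ha : 0 < a) (has : a * s = N - n)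
    (hap : a * p = p - n - n₁) (hφ : EqOn φ (fun ρ => ρ ^ a / a) (Ioi 0)) (hr : 0 < r)
    (u : ℝ → ℝ) :
    radialDiffusion p m k (1 - N) (n₁ + N - 1) (fun ρ => u (φ ρ)) r =
      r ^ (-n) * radialDiffusion p m k (1 - s) (s - 1) u (φ r) := by
  have flux_eq : radialFlux p m k (n₁ + N - 1) (fun ρ => u (φ ρ)) =ᶠ[𝓝 r]
      fun ρ => a ^ (s - 1) * radialFlux p m k (s - 1) u (φ ρ) := by
    filter_upwards [Ioi_mem_nhds hr] with ρ hρ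
    exact radialFlux_comp ha (by linear_combination hap - has) hφ hρ u
  have weight : r ^ (1 - N) * r ^ (a - 1) * a ^ (s - 1) = r ^ (-n) * φ r ^ (1 - s) :=
    calc r ^ (1 - N) * r ^ (a - 1) * a ^ (s - 1)
        = r ^ (-n) * r ^ (a * (1 - s)) * a ^ (s - 1) := by
          rw [← rpow_add hr, ← rpow_add hr]
          congr 2
          linear_combination has
      _ = r ^ (-n) * φ r ^ (1 - s) := by
          rw [hφ hr, div_rpow (rpow_nonneg hr.le a) ha.le, ← rpow_mul hr.le, ← neg_sub s 1,
            rpow_neg ha.le, div_inv_eq_mul, mul_assoc]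
  rw [radialDiffusion, radialDiffusion, flux_eq.deriv_eq, deriv_const_mul_field,
    deriv_comp_of_eqOn_rpow_div ha.ne' hφ hr]
  linear_combination deriv (radialFlux p m k (s - 1) u) (φ r) * weight

end ChangeOfVariable

theorem radial_equation_of_profile_equation {p m k s a N n n₁ β c t r V' : ℝ} {V T φ : ℝ → ℝ}
    {w : ℝ → ℝ → ℝ} (ha : 0 < a) (has : a * s = N - n) (hap : a * p = p - n - n₁)
    (hφ : EqOn φ (fun ρ => ρ ^ a / a) (Ioi 0)) (hr : 0 < r) (hVpos : 0 < V t)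
    (hV : HasDerivAt V V' t) (hT : HasDerivAt T (V t ^ (m + k * (p - 2) - 1)) t)
    (hbalance : c * T t * V' = -V t ^ (m + k * (p - 2)))
    (hwpos : ∀ y, 0 < y → 0 < w (T t) y)
    (hw : DifferentiableAt ℝ (fun x => w x (φ r)) (T t))
    (hpde : deriv (fun x => w x (φ r)) (T t) =
      radialDiffusion p m k (1 - s) (s - 1) (w (T t)) (φ r) +
        (w (T t) (φ r) ^ β + w (T t) (φ r)) / (c * T t)) :
    r ^ (-n) * deriv (fun t' => V t' * w (T t') (φ r)) t =
      radialDiffusion p m k (1 - N) (n₁ + N - 1) (fun ρ => V t * w (T t) (φ ρ)) r -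
        r ^ (-n) * V' * w (T t) (φ r) ^ β := by
  have product_rule : deriv (fun t' => V t' * w (T t') (φ r)) t =
      V' * w (T t) (φ r) +
        V t * (deriv (fun x => w x (φ r)) (T t) * V t ^ (m + k * (p - 2) - 1)) :=
    (hV.mul (hw.hasDerivAt.comp t hT)).deriv
  have profile_nonneg : ∀ᶠ ρ in 𝓝 r, 0 ≤ w (T t) (φ ρ) := by
    filter_upwards [Ioi_mem_nhds hr] with ρ (hρ : 0 < ρ)
    exact (hwpos _ (by rw [hφ hρ]; positivity)).le
  have diffusion_eq := radialDiffusion_const_mul (p := p) (m := m) (k := k) (ν := 1 - N)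
    (σ := n₁ + N - 1) hVpos profile_nonneg
  rw [radialDiffusion_comp ha has hap hφ hr] at diffusion_eq
  have hVM : V t * V t ^ (m + k * (p - 2) - 1) = V t ^ (m + k * (p - 2)) := by
    rw [rpow_sub_one hVpos.ne', mul_div_cancel₀ _ hVpos.ne']
  have hcT : c * T t ≠ 0 :=
    left_ne_zero_of_mul (hbalance ▸ neg_ne_zero.2 (rpow_pos_of_pos hVpos _).ne')
  have reaction_eq (z : ℝ) : V t ^ (m + k * (p - 2)) * (z / (c * T t)) = -V' * z := by
    rw [mul_div_assoc', div_eq_iff hcT]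
    linear_combination z * hbalance
  rw [product_rule, diffusion_eq, hpde]
  linear_combination r ^ (-n) * reaction_eq (w (T t) (φ r) ^ β + w (T t) (φ r)) +
    r ^ (-n) * (radialDiffusion p m k (1 - s) (s - 1) (w (T t)) (φ r) +
      (w (T t) (φ r) ^ β + w (T t) (φ r)) / (c * T t)) * hVM

section PowerLaws

variable {C α t : ℝ}

theorem hasDerivAt_of_eqOn_const_mul_rpow {f : ℝ → ℝ}
    (hf : EqOn f (fun x => C * x ^ α) (Ioi 0)) (ht : 0 < t) :
    HasDerivAt f (α * f t / t) t := by
  have h : HasDerivAt (fun x => C * x ^ α) (C * (α * t ^ (α - 1))) t :=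
    (hasDerivAt_rpow_const (Or.inl ht.ne')).const_mul C
  refine (h.congr_of_eventuallyEq (hf.eventuallyEq_of_mem (Ioi_mem_nhds ht))).congr_deriv ?_
  rw [hf ht, rpow_sub_one ht.ne']
  ring

theorem const_mul_rpow_rpow (hC : 0 ≤ C) (ht : 0 ≤ t) (M : ℝ) :
    (C * t ^ α) ^ M = C ^ M * t ^ (α * M) := by
  rw [mul_rpow hC (rpow_nonneg ht α), ← rpow_mul ht]

theorem mul_const_mul_rpow_rpow (hC : 0 ≤ C) (ht : 0 < t) (M : ℝ) :
    t * (C * t ^ α) ^ M = C ^ M * t ^ (α * M + 1) := by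
  rw [const_mul_rpow_rpow hC ht.le, rpow_add_one ht.ne']
  ring

theorem rpow_mul_const_mul_rpow_rpow {β l : ℝ} (hC : 0 < C) (ht : 0 < t)
    (hα : α * (1 - β) = 1 + l) :
    t ^ l * (C * t ^ α) ^ β = C ^ (β - 1) * (C * t ^ α) / t := by
  have hexp : l + α * β = α - 1 := by linear_combination -hα
  rw [const_mul_rpow_rpow hC.le ht.le, mul_left_comm, ← rpow_add ht, hexp, rpow_sub_one ht.ne',
    rpow_sub_one hC.ne']
  field_simp

theorem rpow_one_div_one_sub_rpow_sub_one {b β : ℝ} (hb : 0 ≤ b) (hβ : 1 - β ≠ 0) :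
    (b ^ (1 / (1 - β))) ^ (β - 1) = b⁻¹ := by
  rw [← rpow_mul hb, ← neg_sub 1 β, mul_neg, one_div_mul_cancel hβ, rpow_neg_one]

theorem hasDerivAt_neg_mul_rpow_of_eqOn_const_mul_rpow {f : ℝ → ℝ} {γ β l : ℝ}
    (hb : 0 < γ * (β - 1) / (1 + l)) (hC : C = (γ * (β - 1) / (1 + l)) ^ (1 / (1 - β)))
    (hf : EqOn f (fun x => C * x ^ ((1 + l) / (1 - β))) (Ioi 0)) (ht : 0 < t) :
    HasDerivAt f (-(γ * t ^ l * f t ^ β)) t := by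
  obtain ⟨⟨hγ, hβ⟩, hl⟩ : (γ ≠ 0 ∧ β - 1 ≠ 0) ∧ 1 + l ≠ 0 := by
    simpa only [div_ne_zero_iff, mul_ne_zero_iff] using hb.ne'
  have hβ' : 1 - β ≠ 0 := sub_ne_zero.2 (sub_ne_zero.1 hβ).symm
  have hCpos : 0 < C := hC ▸ rpow_pos_of_pos hb _
  have hCβ : C ^ (β - 1) = (γ * (β - 1) / (1 + l))⁻¹ :=
    hC ▸ rpow_one_div_one_sub_rpow_sub_one hb.le hβ'
  refine (hasDerivAt_of_eqOn_const_mul_rpow hf ht).congr_deriv ?_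
  rw [hf ht, mul_assoc γ, rpow_mul_const_mul_rpow_rpow hCpos ht (div_mul_cancel₀ _ hβ'), hCβ,
    ← neg_sub β 1]
  field_simp

section Clock

variable {M : ℝ} {V T : ℝ → ℝ}

theorem mul_clock_eq
    (hV : EqOn V (fun x => C * x ^ α) (Ioi 0))
    (hT : EqOn T (fun x => C ^ M * x ^ (α * M + 1) / (α * M + 1)) (Ioi 0))
    (hC : 0 ≤ C) (hM : α * M + 1 ≠ 0) (ht : 0 < t) :
    (α * M + 1) * T t = t * V t ^ M := by
  rw [hV ht, hT ht, mul_const_mul_rpow_rpow hC ht, mul_div_cancel₀ _ hM]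

theorem hasDerivAt_clock
    (hV : EqOn V (fun x => C * x ^ α) (Ioi 0))
    (hT : EqOn T (fun x => C ^ M * x ^ (α * M + 1) / (α * M + 1)) (Ioi 0))
    (hC : 0 ≤ C) (hM : α * M + 1 ≠ 0) (ht : 0 < t) :
    HasDerivAt T (V t ^ M) t := by
  have hT' : EqOn T (fun x => C ^ M / (α * M + 1) * x ^ (α * M + 1)) (Ioi 0) :=
    hT.trans fun x _ => mul_div_right_comm _ _ _
  refine (hasDerivAt_of_eqOn_const_mul_rpow hT' ht).congr_deriv ?_
  rw [mul_clock_eq hV hT hC hM ht, mul_div_cancel_left₀ _ ht.ne']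

theorem clock_mul_deriv_amplitude
    (hV : EqOn V (fun x => C * x ^ α) (Ioi 0))
    (hT : EqOn T (fun x => C ^ M * x ^ (α * M + 1) / (α * M + 1)) (Ioi 0))
    (hC : 0 < C) (hα : α ≠ 0) (hM : α * M + 1 ≠ 0) (ht : 0 < t) :
    -(α * M + 1) / α * T t * deriv V t = -V t ^ (M + 1) := by
  have hVpos : 0 < V t := hV ht ▸ mul_pos hC (rpow_pos_of_pos ht α)
  rw [(hasDerivAt_of_eqOn_const_mul_rpow hV ht).deriv, rpow_add_one hVpos.ne']
  field_simp
  linear_combination -mul_clock_eq hV hT hC.le hM ht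

end Clock

end PowerLaws

theorem stmt3_general
    {p q N n n₁ l m₂ k₂ β₂ s l₅ l₇ l₁ l₆ : ℝ} {vbar τ φfun : ℝ → ℝ} {w : ℝ → ℝ → ℝ}
    (hp : 0 < p) (hpn : n + n₁ < p)
    (hs : s = p * (N - n) / (p - n - n₁))
    (hl₅ : l₅ = (1 + l) * (m₂ + k₂ * (p - 2) - 1))
    (hl₇ : l₇ = -(l₅ + 1 - β₂) / (1 + l))
    (hbase : 0 < (1 - q) * (β₂ - 1) / (1 + l))
    (hclock : 0 < (1 - β₂) / (l₅ + 1 - β₂))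
    (hl₁ : l₁ = ((1 - q) * (β₂ - 1) / (1 + l)) ^ (1 / (1 - β₂)))
    (hl₆ : l₆ = l₁ ^ (m₂ + k₂ * (p - 2) - 1))
    (hvbar : ∀ t, 0 < t → vbar t = l₁ * t ^ ((1 + l) / (1 - β₂)))
    (hτ : ∀ t, 0 < t →
      τ t = l₆ * (1 - β₂) * t ^ ((l₅ + 1 - β₂) / (1 - β₂)) / (l₅ + 1 - β₂))
    (hφfun : ∀ r, 0 < r → φfun r = p * r ^ ((p - n - n₁) / p) / (p - n - n₁))
    (hwpos : ∀ x, 0 < x → ∀ y, 0 < y → 0 < w x y)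
    (hw : ∀ y, 0 < y → DifferentiableOn ℝ (fun x => w x y) (Ioi 0))
    (hwpde : ∀ x, 0 < x → ∀ y, 0 < y →
      deriv (fun x' => w x' y) x =
        radialDiffusion p m₂ k₂ (1 - s) (s - 1) (w x) y + (w x y ^ β₂ + w x y) / (l₇ * x))
    {t r : ℝ} (ht : 0 < t) (hr : 0 < r) :
    r ^ (-n) * deriv (fun t' => vbar t' * w (τ t') (φfun r)) t =
      radialDiffusion p m₂ k₂ (1 - N) (n₁ + N - 1) (fun ρ => vbar t * w (τ t) (φfun ρ)) r +
        (1 - q) * r ^ (-n) * t ^ l * (vbar t * w (τ t) (φfun r)) ^ β₂ := by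
  have hβ₂ : 1 - β₂ ≠ 0 := (div_ne_zero_iff.1 hclock.ne').1
  have hl : 1 + l ≠ 0 := (div_ne_zero_iff.1 hbase.ne').2
  have hpn' : 0 < p - n - n₁ := by linarith
  have hl₁pos : 0 < l₁ := hl₁ ▸ rpow_pos_of_pos hbase _
  have hVpos : 0 < vbar t := hvbar t ht ▸ by positivity
  have hφpos : 0 < φfun r := hφfun r hr ▸ by positivity
  have hφ : EqOn φfun (fun ρ => ρ ^ ((p - n - n₁) / p) / ((p - n - n₁) / p)) (Ioi 0) :=
    fun ρ hρ => (hφfun ρ hρ).trans (by field_simp)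
  set α := (1 + l) / (1 - β₂) with hα
  set M := m₂ + k₂ * (p - 2) - 1 with hM
  have hexp : α * M + 1 = (l₅ + 1 - β₂) / (1 - β₂) := by
    rw [hl₅, hα]
    field_simp
    ring
  have hexp_pos : 0 < α * M + 1 := by
    rw [hexp, ← inv_div]
    exact inv_pos.2 hclock
  have hτ' : EqOn τ (fun x => l₁ ^ M * x ^ (α * M + 1) / (α * M + 1)) (Ioi 0) := by
    intro x hx
    simp only [hτ x hx, hexp, ← hl₆]
    field_simp
  have hτpos : 0 < τ t := hτ' ht ▸ by positivity
  have hdV : HasDerivAt vbar (-((1 - q) * t ^ l * vbar t ^ β₂)) t :=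
    hasDerivAt_neg_mul_rpow_of_eqOn_const_mul_rpow hbase hl₁ hvbar ht
  have hbalance : l₇ * τ t * -((1 - q) * t ^ l * vbar t ^ β₂) =
      -vbar t ^ (m₂ + k₂ * (p - 2)) := by
    have h := clock_mul_deriv_amplitude hvbar hτ' hl₁pos (div_ne_zero hl hβ₂) hexp_pos.ne' ht
    rwa [hdV.deriv, hM, sub_add_cancel, ← hM, hexp, hα, ← neg_div,
      div_div_div_cancel_right₀ hβ₂, ← hl₇] at h
  have has : (p - n - n₁) / p * s = N - n := by
    rw [hs]
    field_simp
  rw [radial_equation_of_profile_equation (div_pos hpn' hp) has (div_mul_cancel₀ _ hp.ne') hφ hr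
    hVpos hdV (hasDerivAt_clock hvbar hτ' hl₁pos.le hexp_pos.ne' ht) hbalance (hwpos _ hτpos)
    ((hw _ hφpos).differentiableAt (Ioi_mem_nhds hτpos)) (hwpde _ hτpos _ hφpos),
    mul_rpow hVpos.le (hwpos _ hτpos _ hφpos).le]
  ring

/-- If `w(τ,φ)` is a positive solution of
`∂_τ w = φ^{1-s} ∂_φ(φ^{s-1} w^{m₂-1} |∂_φ(w^{k₂})|^{p-2} ∂_φ w) + (w^{β₂}+w)/(l₇ τ)`
on `(0,∞) × (0,∞)`, then `v(t,r) = v̄(t) w(τ(t), φ(r))` solves the radial equation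
`r^{-n} ∂ₜv = r^{1-N} ∂_r(r^{n₁+N-1} v^{m₂-1} |∂_r(v^{k₂})|^{p-2} ∂_r v) + (1-q) r^{-n} t^l v^{β₂}`
for all `t > 0`, `r > 0`. -/
theorem stmt3
    (p q k m N n n₁ l β : ℝ)
    (hp : 2 ≤ p) (hq0 : 0 < q) (hq1 : q < 1) (hk : 1 ≤ k) (hm : 1 ≤ m)
    (hn0 : 0 ≤ n) (hnN : n < N) (hpn : n + n₁ < p)
    (m₂ k₂ β₂ s l₅ l₇ : ℝ)
    (hm₂ : m₂ = m / (1 - q)) (hk₂ : k₂ = k / (1 - q))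
    (hβ₂ : β₂ = (β - q) / (1 - q))
    (hs : s = p * (N - n) / (p - n - n₁))
    (hl₅ : l₅ = (1 + l) * (m₂ + k₂ * (p - 2) - 1))
    (hl₇ : l₇ = -(l₅ + 1 - β₂) / (1 + l))
    (hl : -1 < l) (hβ₂1 : 1 < β₂) (hβ₂l₅ : l₅ + 1 < β₂)
    (l₁ l₆ : ℝ)
    (hl₁ : l₁ = ((1 - q) * (β₂ - 1) / (1 + l)) ^ ((1 : ℝ) / (1 - β₂)))
    (hl₆ : l₆ = l₁ ^ (m₂ + k₂ * (p - 2) - 1))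
    (vbar τ φfun : ℝ → ℝ)
    (hvbar : ∀ t, 0 < t → vbar t = l₁ * t ^ ((1 + l) / (1 - β₂)))
    (hτ : ∀ t, 0 < t →
      τ t = l₆ * (1 - β₂) * t ^ ((l₅ + 1 - β₂) / (1 - β₂)) / (l₅ + 1 - β₂))
    (hτpos : ∀ t, 0 < t → 0 < τ t)
    (hφfun : ∀ r, 0 < r → φfun r = p * r ^ ((p - n - n₁) / p) / (p - n - n₁))
    (w : ℝ → ℝ → ℝ)
    (hwpos : ∀ x, 0 < x → ∀ y, 0 < y → 0 < w x y)
    (hw_τ : ∀ y, 0 < y → ContDiffOn ℝ 1 (fun x => w x y) (Ioi 0))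
    (hw_φ : ∀ x, 0 < x → ContDiffOn ℝ 2 (fun y => w x y) (Ioi 0))
    (hwpde : ∀ x, 0 < x → ∀ y, 0 < y →
      deriv (fun x' => w x' y) x
        = y ^ (1 - s) *
            deriv (fun y' => y' ^ (s - 1) * w x y' ^ (m₂ - 1) *
              |deriv (fun y'' => w x y'' ^ k₂) y'| ^ (p - 2) *
              deriv (fun y'' => w x y'') y') y
          + (w x y ^ β₂ + w x y) / (l₇ * x)) :
    ∀ t, 0 < t → ∀ r, 0 < r →
      r ^ (-n) * deriv (fun t' => vbar t' * w (τ t') (φfun r)) t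
        = r ^ (1 - N) *
            deriv (fun ρ => ρ ^ (n₁ + N - 1) * (vbar t * w (τ t) (φfun ρ)) ^ (m₂ - 1) *
              |deriv (fun σ => (vbar t * w (τ t) (φfun σ)) ^ k₂) ρ| ^ (p - 2) *
              deriv (fun σ => vbar t * w (τ t) (φfun σ)) ρ) r
          + (1 - q) * r ^ (-n) * t ^ l * (vbar t * w (τ t) (φfun r)) ^ β₂ := by
  intro t ht r hr
  have hbase : 0 < (1 - q) * (β₂ - 1) / (1 + l) :=
    div_pos (mul_pos (by linarith) (by linarith)) (by linarith)
  have hclock : 0 < (1 - β₂) / (l₅ + 1 - β₂) := div_pos_of_neg_of_neg (by linarith) (by linarith)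
  exact stmt3_general (by linarith) hpn hs hl₅ hl₇ hbase hclock hl₁ hl₆ hvbar hτ hφfun hwpos
    (fun y hy => (hw_τ y hy).differentiableOn one_ne_zero) hwpde ht hr
end

section
/- Assume l > -1, N > n, p > n + n₁, and β₂ > l₅ + 1 (so that l₇ > 0). Then the inequality 1/l₇ - s/p ≤ 0 holds if and only if β₂ ≥ β₂c, where β₂c := 1 + (1+l)·[ m₂ + k₂(p-2) + (p - n₁ - N)/(N - n) ] is the critical Fujita exponent. -/
open Real Set Filter Topology

/-!
Both conditions compare the scaling ratio `(p - n - n₁) / (N - n)` with `l₇`. Cancelling `p` gives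
`s / p = (N - n) / (p - n - n₁)`, so `1 / l₇ ≤ s / p` inverts to `(p - n - n₁) / (N - n) ≤ l₇`.
On the other side, `(p - n₁ - N) / (N - n) = (p - n - n₁) / (N - n) - 1` turns the critical exponent
into `l₅ + 1 + (1 + l) * ((p - n - n₁) / (N - n))`, while `β₂ = l₅ + 1 + (1 + l) * l₇`.
-/

section Field

variable {K : Type*} [Field K]

theorem criticalExponent_eq_add_mul_div {N n : K} (hN : N - n ≠ 0) (p n₁ a c : K) :
    1 + c * (a + (p - n₁ - N) / (N - n)) =
      c * (a - 1) + 1 + c * ((p - n - n₁) / (N - n)) := by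
  have ratio_sub_one : (p - n₁ - N) / (N - n) = (p - n - n₁) / (N - n) - 1 := by
    rw [div_sub_one hN]
    ring
  rw [ratio_sub_one]
  ring

end Field

section LinearOrderedField

variable {K : Type*} [Field K] [LinearOrder K] [IsStrictOrderedRing K]

theorem one_div_sub_div_nonpos_iff_div_le {a b c : K} (ha : 0 < a) (hb : 0 < b) (hc : 0 < c) :
    1 / a - b / c ≤ 0 ↔ c / b ≤ a := by
  rw [sub_nonpos, one_div_le ha (div_pos hb hc), one_div_div]

theorem le_sub_div_iff_add_mul_le {c : K} (hc : 0 < c) (a b y : K) :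
    a ≤ (y - b) / c ↔ b + c * a ≤ y := by
  rw [le_div_iff₀' hc, le_sub_iff_add_le']

theorem stmt7_general
    {p N n n₁ l m₂ k₂ β₂ s l₅ l₇ β₂c : K}
    (hp : p ≠ 0) (hnN : n < N) (hpn : n + n₁ < p)
    (hs : s = p * (N - n) / (p - n - n₁))
    (hl₅ : l₅ = (1 + l) * (m₂ + k₂ * (p - 2) - 1))
    (hl₇ : l₇ = -(l₅ + 1 - β₂) / (1 + l))
    (hl : -1 < l) (hβ₂ : l₅ + 1 < β₂)
    (hβ₂c : β₂c = 1 + (1 + l) * (m₂ + k₂ * (p - 2) + (p - n₁ - N) / (N - n))) :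
    1 / l₇ - s / p ≤ 0 ↔ β₂c ≤ β₂ := by
  have hNn : 0 < N - n := sub_pos.2 hnN
  have hpnn₁ : 0 < p - n - n₁ := by linarith
  have one_add_l_pos : 0 < 1 + l := by linarith
  have s_div_p : s / p = (N - n) / (p - n - n₁) := by
    rw [hs, mul_div_assoc, mul_div_cancel_left₀ _ hp]
  have l₇_eq : l₇ = (β₂ - (l₅ + 1)) / (1 + l) := by rw [hl₇, neg_sub]
  have l₇_pos : 0 < l₇ := l₇_eq ▸ div_pos (sub_pos.2 hβ₂) one_add_l_pos
  have β₂c_eq : β₂c = l₅ + 1 + (1 + l) * ((p - n - n₁) / (N - n)) := by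
    rw [hβ₂c, hl₅, criticalExponent_eq_add_mul_div hNn.ne']
  calc 1 / l₇ - s / p ≤ 0
      ↔ (p - n - n₁) / (N - n) ≤ l₇ := by
        rw [s_div_p, one_div_sub_div_nonpos_iff_div_le l₇_pos hNn hpnn₁]
    _ ↔ β₂c ≤ β₂ := by rw [l₇_eq, le_sub_div_iff_add_mul_le one_add_l_pos, β₂c_eq]

end LinearOrderedField

/-- Critical Fujita exponent: under `l > -1`, `N > n`, `p > n + n₁` and `β₂ > l₅ + 1`
(so `l₇ > 0`), the inequality `1/l₇ - s/p ≤ 0` holds iff `β₂ ≥ β₂c`, where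
`β₂c = 1 + (1+l)[m₂ + k₂(p-2) + (p - n₁ - N)/(N - n)]`. -/
theorem stmt7
    (p q k m N n n₁ l β : ℝ)
    (hp : 2 ≤ p) (hq0 : 0 < q) (hq1 : q < 1) (hk : 1 ≤ k) (hm : 1 ≤ m)
    (hn0 : 0 ≤ n) (hnN : n < N) (hpn : n + n₁ < p)
    (m₂ k₂ β₂ s l₅ l₇ : ℝ)
    (hm₂ : m₂ = m / (1 - q)) (hk₂ : k₂ = k / (1 - q))
    (hβ₂ : β₂ = (β - q) / (1 - q))
    (hs : s = p * (N - n) / (p - n - n₁))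
    (hl₅ : l₅ = (1 + l) * (m₂ + k₂ * (p - 2) - 1))
    (hl₇def : l₇ = -(l₅ + 1 - β₂) / (1 + l))
    (hl : -1 < l) (hβ₂l₅ : l₅ + 1 < β₂)
    (β₂c : ℝ)
    (hβ₂c : β₂c = 1 + (1 + l) * (m₂ + k₂ * (p - 2) + (p - n₁ - N) / (N - n))) :
    1 / l₇ - s / p ≤ 0 ↔ β₂c ≤ β₂ := by
  exact stmt7_general (zero_lt_two.trans_le hp).ne' hnN hpn hs hl₅ hl₇def hl hβ₂l₅ hβ₂c
end
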